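/- Let f^L, f^R : ℝⁿ → ℝⁿ be C¹, H : ℝⁿ → ℝ be C², and suppose there is a C¹ function α : ℝⁿ → ℝ with 𝓛_{f^L}H(x) − 𝓛_{f^R}H(x) = α(x)·H(x) for all x. Write V = 𝓛_{f^L}H. Let x satisfy H(x) = 0 and V(x) = 0, and write a = 𝓛²_{f^L}H(x), b = 𝓛²_{f^R}H(x), assuming a ≠ b. Define the second-order sliding vector field f^T(x) = (f^R(x)·a − f^L(x)·b)/(a − b). Then f^T(x) is tangent to the tangency surface 𝒯 = {y : H(y) = 0, V(y) = 0} in the sense that DH(x)[f^T(x)] = 0 and DV(x)[f^T(x)] = 0. Moreover f^T(x) is the value at s = a/(a − b) of the convex-combination family F(x,s) = (1−s)f^L(x) + s f^R(x), and for every s ∈ ℝ one has DV(x)[F(x,s)] = (1−s)·a + s·b. -/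

import Mathlib

/-- Iterated Lie derivatives: `lieIter f h m = 𝓛_f^m h`, defined recursively by
`𝓛_f^0 h = h` and `𝓛_f^{m+1} h (x) = D(𝓛_f^m h)(x)[f(x)]`. -/
noncomputable def lieIter {n : ℕ} (f : EuclideanSpace ℝ (Fin n) → EuclideanSpace ℝ (Fin n))
    (h : EuclideanSpace ℝ (Fin n) → ℝ) : ℕ → EuclideanSpace ℝ (Fin n) → ℝ
  | 0 => h
  | m + 1 => fun x => fderiv ℝ (lieIter f h m) x (f x)

/-!
The functions `V_L = 𝓛_{f^L}H` and `V_R = 𝓛_{f^R}H` differ by `α • H`. At a zero of `H` the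
derivative of `α • H` is `α x • DH(x)`, so `DV_L(x)` and `DV_R(x)` agree on `ker DH(x)`. At a
tangency point `f^R(x)` lies in this kernel, whence `DV_L(x)[f^R(x)] = 𝓛²_{f^R}H(x) = b`. So
`DV_L(x)` takes the values `a` and `b` at `f^L(x)` and `f^R(x)`, and `s = a / (a - b)` is the point
where its affine interpolation `(1 - s) a + s b` vanishes.
-/

open Filter Topology

variable {𝕜 E F : Type*} [NontriviallyNormedField 𝕜] [NormedAddCommGroup E] [NormedSpace 𝕜 E]
  [NormedAddCommGroup F] [NormedSpace 𝕜 F]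

section DerivativeOfSMul

variable {c : E → 𝕜} {f V W : E → F} {f' : E →L[𝕜] F} {x w : E}

theorem hasFDerivAt_smul_of_continuousAt_of_eq_zero (hc : ContinuousAt c x)
    (hf : HasFDerivAt f f' x) (hfx : f x = 0) : HasFDerivAt (c • f) (c x • f') x := by
  have hf_bigO : f =O[𝓝 x] fun y => y - x := by
    simpa only [hfx, sub_zero] using hf.isBigO_sub
  have hc_littleO : (fun y => c y - c x) =o[𝓝 x] fun _ => (1 : 𝕜) :=
    (Asymptotics.isLittleO_one_iff 𝕜).2 (tendsto_sub_nhds_zero_iff.2 hc)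
  have h_error : HasFDerivAt (fun y => (c y - c x) • f y) (0 : E →L[𝕜] F) x :=
    .of_isLittleO <| by simpa [hfx] using hc_littleO.smul_isBigO hf_bigO
  convert (hf.const_smul (c x)).add h_error using 1
  · ext y
    simp [sub_smul]
  · rw [add_zero]

theorem fderiv_apply_eq_of_sub_eventuallyEq_smul (hVW : V - W =ᶠ[𝓝 x] c • f)
    (hW : DifferentiableAt 𝕜 W x) (hc : ContinuousAt c x) (hf : DifferentiableAt 𝕜 f x)
    (hfx : f x = 0) (hw : fderiv 𝕜 f x w = 0) : fderiv 𝕜 V x w = fderiv 𝕜 W x w := by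
  have hV : V =ᶠ[𝓝 x] W + c • f := hVW.mono fun y hy => sub_eq_iff_eq_add'.1 hy
  have hcf := hasFDerivAt_smul_of_continuousAt_of_eq_zero hc hf.hasFDerivAt hfx
  rw [hV.fderiv_eq, (hW.hasFDerivAt.add hcf).fderiv]
  simp [hw]

end DerivativeOfSMul

variable (𝕜) in
/-- The Lie derivative `𝓛_v h` of a function `h` along a vector field `v` on a normed space. It
extends one step of `lieIter` to arbitrary normed spaces: `lieIter v h m` is the `m`-fold iterate
of `lieDeriv ℝ v` applied to `h`. -/
noncomputable def lieDeriv (v : E → E) (h : E → F) (x : E) : F :=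
  fderiv 𝕜 h x (v x)

theorem differentiableAt_lieDeriv {v : E → E} {h : E → F} {x : E}
    (hh : ContDiffAt 𝕜 2 h x) (hv : DifferentiableAt 𝕜 v x) :
    DifferentiableAt 𝕜 (lieDeriv 𝕜 v h) x :=
  ((hh.fderiv_right (m := 1) (by norm_num)).differentiableAt one_ne_zero).clm_apply hv

theorem inv_sub_smul_sub_eq_affine_combination {K M : Type*} [Field K] [AddCommGroup M]
    [Module K M] {a b : K} (hab : a ≠ b) (u v : M) :
    (a - b)⁻¹ • (a • v - b • u) = (1 - a / (a - b)) • u + (a / (a - b)) • v := by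
  have hab' : a - b ≠ 0 := sub_ne_zero.2 hab
  match_scalars <;> field_simp
  ring

theorem second_order_sliding_tangent_general {fL fR : E → E} {H α : E → 𝕜} {x : E}
    (hfR : DifferentiableAt 𝕜 fR x) (hH : ContDiffAt 𝕜 2 H x) (hα : ContinuousAt α x)
    (hso : lieDeriv 𝕜 fL H - lieDeriv 𝕜 fR H =ᶠ[𝓝 x] α • H)
    (hHx : H x = 0) (hVx : lieDeriv 𝕜 fL H x = 0) {a b : 𝕜}
    (ha : a = lieDeriv 𝕜 fL (lieDeriv 𝕜 fL H) x) (hb : b = lieDeriv 𝕜 fR (lieDeriv 𝕜 fR H) x)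
    (hab : a ≠ b) {fT : E} (hfT : fT = (a - b)⁻¹ • (a • fR x - b • fL x)) :
    fderiv 𝕜 H x fT = 0 ∧
    fderiv 𝕜 (lieDeriv 𝕜 fL H) x fT = 0 ∧
    fT = (1 - a / (a - b)) • fL x + (a / (a - b)) • fR x ∧
    ∀ s : 𝕜, fderiv 𝕜 (lieDeriv 𝕜 fL H) x ((1 - s) • fL x + s • fR x) = (1 - s) * a + s * b := by
  have hHL : fderiv 𝕜 H x (fL x) = 0 := hVx
  have hHR : fderiv 𝕜 H x (fR x) = 0 := by
    simpa [lieDeriv, hHL, hHx] using hso.self_of_nhds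
  have hVL : fderiv 𝕜 (lieDeriv 𝕜 fL H) x (fL x) = a := ha.symm
  have hVR : fderiv 𝕜 (lieDeriv 𝕜 fL H) x (fR x) = b :=
    (fderiv_apply_eq_of_sub_eventuallyEq_smul hso (differentiableAt_lieDeriv hH hfR) hα
      (hH.differentiableAt two_ne_zero) hHx hHR).trans hb.symm
  refine ⟨by simp [hfT, hHL, hHR], ?_,
    hfT.trans (inv_sub_smul_sub_eq_affine_combination hab _ _), fun s => by simp [hVL, hVR]⟩
  simp [hfT, hVL, hVR, mul_comm a b]

/-- For a second-order Filippov system, at a tangency point `x` (where `H(x) = 0` and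
`V(x) = 𝓛_{f^L}H(x) = 0`) with `a = 𝓛²_{f^L}H(x) ≠ b = 𝓛²_{f^R}H(x)`, the second-order
sliding vector field `f^T(x) = (a·f^R(x) − b·f^L(x))/(a−b)` is tangent to the tangency
surface: `DH(x)[f^T(x)] = 0` and `DV(x)[f^T(x)] = 0`.  Moreover `f^T(x) = F(x, a/(a−b))`
for the convex-combination family `F(x,s) = (1−s)f^L(x) + s f^R(x)`, and for every `s`,
`DV(x)[F(x,s)] = (1−s)a + s b`. -/
theorem second_order_sliding_tangent {n : ℕ}
    (fL fR : EuclideanSpace ℝ (Fin n) → EuclideanSpace ℝ (Fin n))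
    (H : EuclideanSpace ℝ (Fin n) → ℝ) (α : EuclideanSpace ℝ (Fin n) → ℝ)
    (hfL : ContDiff ℝ 1 fL) (hfR : ContDiff ℝ 1 fR) (hH : ContDiff ℝ 2 H)
    (hα : ContDiff ℝ 1 α)
    (hso : ∀ x, lieIter fL H 1 x - lieIter fR H 1 x = α x * H x)
    (x : EuclideanSpace ℝ (Fin n)) (hHx : H x = 0) (hVx : lieIter fL H 1 x = 0)
    (a b : ℝ) (ha : a = lieIter fL H 2 x) (hb : b = lieIter fR H 2 x) (hab : a ≠ b)
    (fT : EuclideanSpace ℝ (Fin n))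
    (hfT : fT = (a - b)⁻¹ • (a • fR x - b • fL x)) :
    fderiv ℝ H x fT = 0 ∧
    fderiv ℝ (lieIter fL H 1) x fT = 0 ∧
    fT = (1 - a / (a - b)) • fL x + (a / (a - b)) • fR x ∧
    ∀ s : ℝ, fderiv ℝ (lieIter fL H 1) x ((1 - s) • fL x + s • fR x)
      = (1 - s) * a + s * b :=
  second_order_sliding_tangent_general (hfR.differentiable one_ne_zero x) hH.contDiffAt
    hα.continuous.continuousAt (.of_forall hso) hHx hVx ha hb hab hfT
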